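/- arXiv:2403.11841 — 2 statements merged into one kernel-verified Lean document; each statement's English description precedes it below -/
import Mathlib

section
/- Front-door adjustment identity: in a finite confounded mediated MDP satisfying the front-door criterion, the interventional conditional mean reward under a policy π that chooses the action depending only on the state satisfies E^π(R_t | S_t) = Σ_{a,ã,m} p_m(m|S_t,a) π_t(a|S_t) p_b(ã|S_t) E(R_t | M_t=m, A_t=ã, S_t), where p_b(a|s) = P(A_t=a | S_t=s) is the marginal behavior policy in the observational data and the conditional expectations on the right-hand side are with respect to the observational (confounded) data distribution. -/
open scoped BigOperators

/-- A finite confounded mediated Markov decision process (M2DP) satisfying the front-door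
criterion (Assumption 1): the mediator distribution `pm` depends only on the state and the
action (not on the unmeasured confounder), and the reward distribution `pr` and the transition
distribution `ps` depend on the action only through the mediator (the mediator intercepts every
directed path from the action to the reward and the next state). -/
structure M2DP (S C A M Rw : Type) [Fintype S] [Fintype C] [Fintype A] [Fintype M]
    [Fintype Rw] : Type where
  /-- distribution of the unmeasured confounder given the state -/
  pc : S → C → ℝ
  /-- behavior policy, depending on both the state and the unmeasured confounder -/
  pa : S → C → A → ℝ
  /-- mediator distribution -/
  pm : S → A → M → ℝ
  /-- reward distribution -/
  pr : S → C → M → Rw → ℝ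
  /-- transition distribution -/
  ps : S → C → M → S → ℝ
  /-- initial state distribution -/
  rho0 : S → ℝ
  /-- numerical value of a reward outcome -/
  rval : Rw → ℝ
  /-- discount factor -/
  gamma : ℝ
  /-- bound on rewards -/
  Rmax : ℝ
  pc_nonneg : ∀ s c, 0 ≤ pc s c
  pc_sum : ∀ s, ∑ c, pc s c = 1
  pa_nonneg : ∀ s c a, 0 ≤ pa s c a
  pa_sum : ∀ s c, ∑ a, pa s c a = 1
  pm_nonneg : ∀ s a m, 0 ≤ pm s a m
  pm_sum : ∀ s a, ∑ m, pm s a m = 1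
  pr_nonneg : ∀ s c m rw, 0 ≤ pr s c m rw
  pr_sum : ∀ s c m, ∑ rw, pr s c m rw = 1
  ps_nonneg : ∀ s c m s', 0 ≤ ps s c m s'
  ps_sum : ∀ s c m, ∑ s', ps s c m s' = 1
  rho0_nonneg : ∀ s, 0 ≤ rho0 s
  rho0_sum : ∑ s, rho0 s = 1
  gamma_nonneg : 0 ≤ gamma
  gamma_lt_one : gamma < 1
  rval_bound : ∀ rw, |rval rw| ≤ Rmax

namespace M2DP

/-- Observed history: the first `t` completed state-action-mediator-reward transitions. -/
abbrev Hist (S A M Rw : Type) (t : ℕ) : Type := Fin t → S × A × M × Rw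

/-- A general (possibly history-dependent, nonstationary, stochastic) online policy. -/
structure GPolicy (S A M Rw : Type) [Fintype A] : Type where
  act : (t : ℕ) → Hist S A M Rw t → S → A → ℝ
  act_nonneg : ∀ t h s a, 0 ≤ act t h s a
  act_sum : ∀ t h s, ∑ a, act t h s a = 1

variable {S C A M Rw : Type}
variable [Fintype S] [Fintype C] [Fintype A] [Fintype M] [Fintype Rw]
variable [DecidableEq S] [DecidableEq A] [DecidableEq M] [DecidableEq Rw]
variable [Nonempty S] [Nonempty C] [Nonempty A] [Nonempty M] [Nonempty Rw]

/-- The marginal behavior policy `p_b(a|s) = Σ_c p_a(a|s,c) p_c(c|s)` of the observational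
data. -/
noncomputable def pb (d : M2DP S C A M Rw) (s : S) (a : A) : ℝ :=
  ∑ c, d.pc s c * d.pa s c a

/-- The conditional mean reward given `(s, c, m)`. -/
noncomputable def rbar (d : M2DP S C A M Rw) (s : S) (c : C) (m : M) : ℝ :=
  ∑ rw, d.pr s c m rw * d.rval rw

instance : Nonempty (GPolicy S A M Rw) :=
  ⟨{ act := fun _ _ _ _ => (Fintype.card A : ℝ)⁻¹
     act_nonneg := fun _ _ _ _ => by positivity
     act_sum := fun _ _ _ => by
       simp only [Finset.sum_const, Finset.card_univ, nsmul_eq_mul]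
       exact mul_inv_cancel₀ (by exact_mod_cast Fintype.card_ne_zero) }⟩

/-- A deterministic stationary policy viewed as a general policy. -/
noncomputable def detToG (pol : S → A) : GPolicy S A M Rw where
  act := fun _ _ s a => if a = pol s then 1 else 0
  act_nonneg := fun _ _ s a => by by_cases h : a = pol s <;> simp [h]
  act_sum := fun _ _ s => by simp

/-- Joint density of (history of the first `t` transitions, current state `S_t`) under the
interventional distribution induced by the online policy `π` in the M2DP `d` (the action is
drawn from `π` independently of the confounder, given the state). -/
noncomputable def nu (d : M2DP S C A M Rw) (π : GPolicy S A M Rw) :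
    (t : ℕ) → Hist S A M Rw t → S → ℝ
  | 0, _, s => d.rho0 s
  | t + 1, h, s' =>
      ∑ c,
        nu d π t (fun i => h i.castSucc) (h (Fin.last t)).1 *
          d.pc (h (Fin.last t)).1 c *
          π.act t (fun i => h i.castSucc) (h (Fin.last t)).1 (h (Fin.last t)).2.1 *
          d.pm (h (Fin.last t)).1 (h (Fin.last t)).2.1 (h (Fin.last t)).2.2.1 *
          d.pr (h (Fin.last t)).1 c (h (Fin.last t)).2.2.1 (h (Fin.last t)).2.2.2 *
          d.ps (h (Fin.last t)).1 c (h (Fin.last t)).2.2.1 s'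

/-- The expected reward `E^π[R_t]` at time `t` under the interventional distribution. -/
noncomputable def ErtG (d : M2DP S C A M Rw) (π : GPolicy S A M Rw) (t : ℕ) : ℝ :=
  ∑ h : Hist S A M Rw t, ∑ s, ∑ c, ∑ a, ∑ m,
    nu d π t h s * d.pc s c * π.act t h s a * d.pm s a m * rbar d s c m

/-- The expected discounted interventional return `J(π) = Σ_{t≥0} γ^t E^π[R_t]`. -/
noncomputable def JG (d : M2DP S C A M Rw) (π : GPolicy S A M Rw) : ℝ :=
  ∑' t : ℕ, d.gamma ^ t * ErtG d π t

/-- Joint density of (history, current state) at relative time `k` for the process started at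
time `t0` from the fixed history `h0` and state `s0`, following policy `π`. -/
noncomputable def nuFrom (d : M2DP S C A M Rw) (π : GPolicy S A M Rw) (t0 : ℕ)
    (h0 : Hist S A M Rw t0) (s0 : S) :
    (k : ℕ) → Hist S A M Rw (t0 + k) → S → ℝ
  | 0, h, s => if h = h0 ∧ s = s0 then 1 else 0
  | k + 1, h, s' =>
      ∑ c,
        nuFrom d π t0 h0 s0 k (fun i => h i.castSucc) (h (Fin.last (t0 + k))).1 *
          d.pc (h (Fin.last (t0 + k))).1 c *
          π.act (t0 + k) (fun i => h i.castSucc) (h (Fin.last (t0 + k))).1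
            (h (Fin.last (t0 + k))).2.1 *
          d.pm (h (Fin.last (t0 + k))).1 (h (Fin.last (t0 + k))).2.1
            (h (Fin.last (t0 + k))).2.2.1 *
          d.pr (h (Fin.last (t0 + k))).1 c (h (Fin.last (t0 + k))).2.2.1
            (h (Fin.last (t0 + k))).2.2.2 *
          d.ps (h (Fin.last (t0 + k))).1 c (h (Fin.last (t0 + k))).2.2.1 s'

/-- Expected reward `k` steps after starting at time `t0` from history `h0`, state `s0`. -/
noncomputable def ErtFrom (d : M2DP S C A M Rw) (π : GPolicy S A M Rw) (t0 : ℕ)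
    (h0 : Hist S A M Rw t0) (s0 : S) (k : ℕ) : ℝ :=
  ∑ h : Hist S A M Rw (t0 + k), ∑ s, ∑ c, ∑ a, ∑ m,
    nuFrom d π t0 h0 s0 k h s * d.pc s c * π.act (t0 + k) h s a * d.pm s a m * rbar d s c m

/-- Expected discounted return collected from time `t0` onwards, started at history `h0` and
state `s0`. -/
noncomputable def VFrom (d : M2DP S C A M Rw) (π : GPolicy S A M Rw) (t0 : ℕ)
    (h0 : Hist S A M Rw t0) (s0 : S) : ℝ :=
  ∑' k : ℕ, d.gamma ^ k * ErtFrom d π t0 h0 s0 k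

/-- The mediated Q-function
`Q^π(s,a,m) = Σ_{t≥0} γ^t E^π(R_t | S_0=s, A_0=a, M_0=m, do(A_{1:∞} ~ π))`.
(Under the interventional distribution the confounder `C_0` is independent of `(A_0, M_0)`
given `S_0`, so its conditional law given `(s,a,m)` is `p_c(·|s)`.) -/
noncomputable def Qpi (d : M2DP S C A M Rw) (π : GPolicy S A M Rw)
    (s : S) (a : A) (m : M) : ℝ :=
  ∑ c, d.pc s c * (rbar d s c m +
    d.gamma * ∑ rw, ∑ s', d.pr s c m rw * d.ps s c m s' *
      VFrom d π 1 (fun _ => (s, a, m, rw)) s')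

/-- The mediated optimal Q-function `Q*(s,a,m) = sup_π Q^π(s,a,m)`, the supremum being over
the class of all policies. -/
noncomputable def Qstar (d : M2DP S C A M Rw) (s : S) (a : A) (m : M) : ℝ :=
  ⨆ π : GPolicy S A M Rw, Qpi d π s a m

end M2DP

namespace M2DP

variable {S C A M Rw : Type}
variable [Fintype S] [Fintype C] [Fintype A] [Fintype M] [Fintype Rw]
variable [DecidableEq S] [DecidableEq A] [DecidableEq M] [DecidableEq Rw]
variable [Nonempty S] [Nonempty C] [Nonempty A] [Nonempty M] [Nonempty Rw]

/-- A Markov (time-dependent) online policy, whose action distribution depends only on the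
current state, viewed as a general policy. -/
noncomputable def markovToG (pol : ℕ → S → A → ℝ)
    (h0 : ∀ t s a, 0 ≤ pol t s a) (h1 : ∀ t s, ∑ a, pol t s a = 1) :
    GPolicy S A M Rw where
  act := fun t _ s a => pol t s a
  act_nonneg := fun t _ s a => h0 t s a
  act_sum := fun t _ s => h1 t s

end M2DP

/-!
Given the state, the confounder is independent of an action drawn by the policy and of the mediator
it produces, so the interventional mean reward averages `E(R | S, do(M = m))` over the actions and
mediators seen under the policy. Observationally the mediator is independent of the confounder given
the state and the action, so conditioning on `(S, Ã, M)` reweights the confounder by `p_a(ã|s,c)`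
alone; averaging over `ã ~ p_b` undoes this reweighting because `∑ ã, p_a(ã|s,c) = 1`. This
back-door adjustment recovers `E(R | S, do(M = m))` from the observational data.
-/

namespace M2DP

variable {S C A M Rw : Type} [Fintype S] [Fintype C] [Fintype A] [Fintype M] [Fintype Rw]

/-- The observational conditional mean reward `E(R | S = s, A = a, M = m)`, with junk value `0`
when the conditioning event is null. -/
noncomputable def obsMeanReward (d : M2DP S C A M Rw) (s : S) (a : A) (m : M) : ℝ :=
  (∑ c, d.pc s c * d.pa s c a * d.pm s a m * rbar d s c m) /
    (∑ c, d.pc s c * d.pa s c a * d.pm s a m)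

/-- The mean reward `E(R | S = s, do(M = m))` when the mediator is set to `m`, which leaves the
confounder with its law `p_c(·|s)`. -/
noncomputable def doMeanReward (d : M2DP S C A M Rw) (s : S) (m : M) : ℝ :=
  ∑ c, d.pc s c * rbar d s c m

theorem sum_pc_mul_pa_mul_pm (d : M2DP S C A M Rw) (s : S) (a : A) (m : M) :
    ∑ c, d.pc s c * d.pa s c a * d.pm s a m = pb d s a * d.pm s a m := by
  rw [pb, Finset.sum_mul]

theorem pc_mul_pa_eq_zero_of_pb_eq_zero (d : M2DP S C A M Rw) {s : S} {a : A}
    (h : pb d s a = 0) (c : C) : d.pc s c * d.pa s c a = 0 :=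
  (Finset.sum_eq_zero_iff_of_nonneg fun c _ => mul_nonneg (d.pc_nonneg s c) (d.pa_nonneg s c a)).mp
    h c (Finset.mem_univ c)

theorem pb_mul_obsMeanReward (d : M2DP S C A M Rw) {s : S} {a : A} {m : M}
    (h : pb d s a ≠ 0 → d.pm s a m ≠ 0) :
    pb d s a * obsMeanReward d s a m = ∑ c, d.pc s c * d.pa s c a * rbar d s c m := by
  by_cases hpb : pb d s a = 0
  · simp only [hpb, pc_mul_pa_eq_zero_of_pb_eq_zero d hpb, zero_mul, Finset.sum_const_zero]
  · have factor_pm : ∑ c, d.pc s c * d.pa s c a * d.pm s a m * rbar d s c m =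
        (∑ c, d.pc s c * d.pa s c a * rbar d s c m) * d.pm s a m := by
      simp only [Finset.sum_mul, mul_right_comm]
    rw [obsMeanReward, factor_pm, sum_pc_mul_pa_mul_pm, mul_div_mul_right _ _ (h hpb),
      mul_div_cancel₀ _ hpb]

theorem sum_pb_mul_obsMeanReward (d : M2DP S C A M Rw) {s : S} {m : M}
    (h : ∀ a, pb d s a ≠ 0 → d.pm s a m ≠ 0) :
    ∑ a, pb d s a * obsMeanReward d s a m = doMeanReward d s m :=
  calc ∑ a, pb d s a * obsMeanReward d s a m
      = ∑ a, ∑ c, d.pc s c * d.pa s c a * rbar d s c m :=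
        Finset.sum_congr rfl fun a _ => pb_mul_obsMeanReward d (h a)
    _ = ∑ c, d.pc s c * (∑ a, d.pa s c a) * rbar d s c m := by
        rw [Finset.sum_comm]
        simp only [Finset.mul_sum, Finset.sum_mul]
    _ = doMeanReward d s m := by
        simp only [d.pa_sum, mul_one, doMeanReward]

/-- The interventional mass of the event `S_t = s` under the policy `π`. -/
noncomputable def stateMass (d : M2DP S C A M Rw) (π : GPolicy S A M Rw) (t : ℕ) (s : S) : ℝ :=
  ∑ h : Hist S A M Rw t, nu d π t h s

/-- The interventional conditional action probability `P^π(A_t = a | S_t = s)`, obtained by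
averaging the possibly history-dependent policy over the histories that lead to `s`; junk value `0`
when `S_t = s` is null. -/
noncomputable def actionProb (d : M2DP S C A M Rw) (π : GPolicy S A M Rw) (t : ℕ) (s : S) (a : A) :
    ℝ :=
  (∑ h : Hist S A M Rw t, nu d π t h s * π.act t h s a) / stateMass d π t s

/-- The interventional conditional mean reward `E^π(R_t | S_t = s)`, with junk value `0` when
`S_t = s` is null. -/
noncomputable def condMeanReward (d : M2DP S C A M Rw) (π : GPolicy S A M Rw) (t : ℕ) (s : S) : ℝ :=
  (∑ h : Hist S A M Rw t, ∑ c, ∑ a, ∑ m,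
      nu d π t h s * d.pc s c * π.act t h s a * d.pm s a m * rbar d s c m) /
    stateMass d π t s

theorem actionProb_markovToG (d : M2DP S C A M Rw) {pol : ℕ → S → A → ℝ}
    (hpol0 : ∀ t s a, 0 ≤ pol t s a) (hpol1 : ∀ t s, ∑ a, pol t s a = 1) {t : ℕ} {s : S}
    (hS : stateMass d (markovToG pol hpol0 hpol1) t s ≠ 0) (a : A) :
    actionProb d (markovToG pol hpol0 hpol1) t s a = pol t s a := by
  rw [actionProb, div_eq_iff hS, mul_comm, stateMass, Finset.sum_mul]
  rfl

theorem sum_reward_eq_sum_doMeanReward (d : M2DP S C A M Rw) (π : GPolicy S A M Rw) (t : ℕ)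
    (s : S) :
    ∑ h : Hist S A M Rw t, ∑ c, ∑ a, ∑ m,
        nu d π t h s * d.pc s c * π.act t h s a * d.pm s a m * rbar d s c m =
      ∑ a, ∑ m, d.pm s a m * (∑ h : Hist S A M Rw t, nu d π t h s * π.act t h s a) *
        doMeanReward d s m :=
  calc ∑ h : Hist S A M Rw t, ∑ c, ∑ a, ∑ m,
        nu d π t h s * d.pc s c * π.act t h s a * d.pm s a m * rbar d s c m
      = ∑ h : Hist S A M Rw t, ∑ a, ∑ m,
          d.pm s a m * (nu d π t h s * π.act t h s a) * doMeanReward d s m := by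
        refine Finset.sum_congr rfl fun h _ => ?_
        rw [Finset.sum_comm]
        refine Finset.sum_congr rfl fun a _ => ?_
        rw [Finset.sum_comm]
        refine Finset.sum_congr rfl fun m _ => ?_
        rw [doMeanReward, Finset.mul_sum]
        exact Finset.sum_congr rfl fun c _ => by ring
    _ = ∑ a, ∑ m, d.pm s a m * (∑ h : Hist S A M Rw t, nu d π t h s * π.act t h s a) *
          doMeanReward d s m := by
        rw [Finset.sum_comm]
        refine Finset.sum_congr rfl fun a _ => ?_
        rw [Finset.sum_comm]
        simp only [Finset.mul_sum, Finset.sum_mul]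

theorem condMeanReward_eq_sum_doMeanReward (d : M2DP S C A M Rw) (π : GPolicy S A M Rw) {t : ℕ}
    {s : S} (hS : stateMass d π t s ≠ 0) :
    condMeanReward d π t s =
      ∑ a, ∑ m, d.pm s a m * actionProb d π t s a * doMeanReward d s m := by
  have hact : ∀ a, ∑ h : Hist S A M Rw t, nu d π t h s * π.act t h s a =
      actionProb d π t s a * stateMass d π t s := fun a => (div_mul_cancel₀ _ hS).symm
  rw [condMeanReward, div_eq_iff hS, sum_reward_eq_sum_doMeanReward]
  simp only [hact, Finset.sum_mul]
  refine Finset.sum_congr rfl fun a _ => Finset.sum_congr rfl fun m _ => ?_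
  ring

end M2DP

open M2DP in
theorem front_door_adjustment_general
    {S C A M Rw : Type} [Fintype S] [Fintype C] [Fintype A] [Fintype M] [Fintype Rw]
    (d : M2DP S C A M Rw) (π : GPolicy S A M Rw) (t : ℕ) (s : S)
    (hS : 0 < stateMass d π t s)
    -- overlap: no term with a nonzero weight conditions on a null observational event
    (hOverlap : ∀ a ab m, actionProb d π t s a ≠ 0 → d.pm s a m ≠ 0 → pb d s ab ≠ 0 →
      d.pm s ab m ≠ 0) :
    condMeanReward d π t s =
      ∑ a, ∑ ab, ∑ m,
        d.pm s a m * actionProb d π t s a * pb d s ab * obsMeanReward d s ab m := by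
  have adjust (a : A) (m : M) : d.pm s a m * actionProb d π t s a * doMeanReward d s m =
      d.pm s a m * actionProb d π t s a * ∑ ab, pb d s ab * obsMeanReward d s ab m := by
    by_cases hweight : d.pm s a m * actionProb d π t s a = 0
    · rw [hweight, zero_mul, zero_mul]
    · obtain ⟨hpm, hact⟩ := mul_ne_zero_iff.mp hweight
      rw [sum_pb_mul_obsMeanReward d fun ab => hOverlap a ab m hact hpm]
  rw [condMeanReward_eq_sum_doMeanReward d π hS.ne']
  refine Finset.sum_congr rfl fun a _ => ?_
  rw [Finset.sum_comm]
  simp only [adjust, Finset.mul_sum, mul_assoc]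

open M2DP in
/-- front-door adjustment identity.  In a finite confounded mediated MDP
satisfying the front-door criterion, for a policy `π` choosing the action depending only on the
state, the interventional conditional mean reward satisfies
`E^π(R_t | S_t = s) = Σ_{a,ã,m} p_m(m|S_t,a) π_t(a|S_t) p_b(ã|S_t) E(R_t | M_t=m, A_t=ã, S_t)`,
where `p_b` is the marginal behavior policy of the observational data and the conditional
expectation on the right-hand side is with respect to the observational (confounded)
distribution, under which the one-step joint mass at `(s,c,ã,m)` is
`p_c(c|s) p_a(ã|s,c) p_m(m|s,ã)`.  The conditional expectations are written as ratios; the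
positivity hypotheses make them well defined. -/
theorem front_door_adjustment
    {S C A M Rw : Type}
    [Fintype S] [Fintype C] [Fintype A] [Fintype M] [Fintype Rw]
    [DecidableEq S] [DecidableEq A] [DecidableEq M] [DecidableEq Rw]
    [Nonempty S] [Nonempty C] [Nonempty A] [Nonempty M] [Nonempty Rw]
    (d : M2DP S C A M Rw)
    (pol : ℕ → S → A → ℝ)
    (hpol0 : ∀ t s a, 0 ≤ pol t s a) (hpol1 : ∀ t s, ∑ a, pol t s a = 1)
    (t : ℕ) (s : S)
    -- the conditioning event `S_t = s` has positive interventional probability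
    (hS : 0 < ∑ h : Hist S A M Rw t, nu d (markovToG pol hpol0 hpol1) t h s)
    -- the observational conditioning events `(M_t = m, A_t = ã, S_t = s)` have positive mass
    (hObs : ∀ ab m, 0 < ∑ c, d.pc s c * d.pa s c ab * d.pm s ab m) :
    (∑ h : Hist S A M Rw t, ∑ c, ∑ a, ∑ m,
        nu d (markovToG pol hpol0 hpol1) t h s * d.pc s c * pol t s a * d.pm s a m *
          rbar d s c m) /
      (∑ h : Hist S A M Rw t, nu d (markovToG pol hpol0 hpol1) t h s) =
    ∑ a, ∑ ab, ∑ m,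
      d.pm s a m * pol t s a * pb d s ab *
        ((∑ c, d.pc s c * d.pa s c ab * d.pm s ab m * rbar d s c m) /
          (∑ c, d.pc s c * d.pa s c ab * d.pm s ab m)) := by
  have hpm (ab : A) (m : M) : d.pm s ab m ≠ 0 :=
    right_ne_zero_of_mul (sum_pc_mul_pa_mul_pm d s ab m ▸ (hObs ab m).ne')
  refine (front_door_adjustment_general d (markovToG pol hpol0 hpol1) t s hS
    fun _ ab m _ _ _ => hpm ab m).trans ?_
  simp only [actionProb_markovToG d hpol0 hpol1 hS.ne', obsMeanReward]
end

section
/- For any mediated Q-function Q : S × A × M → ℝ with sup-norm at most V_max, and for probability mass functions p_b, p̂_b on A (given s) and p_m, p̂_m on M (given s,a), define q(s,a) = Σ_{m,ã} Q(s,ã,m) p_m(m|s,a) p_b(ã|s) and q̄(s,a) = Σ_{m,ã} Q(s,ã,m) p̂_m(m|s,a) p̂_b(ã|s). Then for every (s,a), |q̄(s,a) − q(s,a)| ≤ V_max [ √(2 KL(p_b(·|s) ‖ p̂_b(·|s))) + √(2 KL(p_m(·|s,a) ‖ p̂_m(·|s,a))) ]. -/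
/-!
# Statement 6 (Lemma S3): KL bound on the error of the plug-in unmediated Q-function

For a mediated Q-function `Q` bounded by `Vmax` and estimated pmfs `p̂_b, p̂_m`,
the plug-in quantities `q(s,a) = Σ_{m,ã} Q(s,ã,m) p_m(m|s,a) p_b(ã|s)` and
`q̄(s,a) = Σ_{m,ã} Q(s,ã,m) p̂_m(m|s,a) p̂_b(ã|s)` satisfy
`|q̄(s,a) − q(s,a)| ≤ Vmax [√(2 KL(p_b(·|s)‖p̂_b(·|s))) + √(2 KL(p_m(·|s,a)‖p̂_m(·|s,a)))]`.
The KL divergence is the finite sum `Σ_x p(x) ln(p(x)/q(x))`; the absolute-continuity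
hypotheses express that the KL divergences are finite (by convention KL is `+∞`, and the
claimed bound trivial, otherwise).
-/

open scoped BigOperators

/-- Kullback–Leibler divergence between two probability mass functions on a finite set. -/
noncomputable def klDiv {X : Type} [Fintype X] (p q : X → ℝ) : ℝ :=
  ∑ x, p x * Real.log (p x / q x)

/-!
Pinsker's inequality is Cauchy–Schwarz applied to the pointwise bound
`3 (x - 1)² ≤ (2 x + 4) (x log x + 1 - x)` at the likelihood ratio `x = p / q`, the weights
`(2 p + 4 q) / 3` having total mass `2`. The error of the plug-in average is at most `Vmax` times
the `ℓ¹` distance of two product distributions, and changing one factor at a time bounds that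
distance by the sum of the `ℓ¹` distances of the factors.
-/

section WeightedSums

variable {ι κ R : Type*} [Ring R] [LinearOrder R] [IsOrderedRing R]

lemma abs_sum_mul_le_mul_sum_abs (s : Finset ι) {f g : ι → R} {C : R}
    (hf : ∀ i ∈ s, |f i| ≤ C) : |∑ i ∈ s, f i * g i| ≤ C * ∑ i ∈ s, |g i| :=
  calc |∑ i ∈ s, f i * g i|
      ≤ ∑ i ∈ s, |f i * g i| := Finset.abs_sum_le_sum_abs _ _
    _ = ∑ i ∈ s, |f i| * |g i| := by simp only [abs_mul]
    _ ≤ ∑ i ∈ s, C * |g i| := Finset.sum_le_sum fun i hi => by gcongr; exact hf i hi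
    _ = C * ∑ i ∈ s, |g i| := (Finset.mul_sum _ _ _).symm

lemma sum_product_abs_mul_sub_mul_le (s : Finset ι) (t : Finset κ) (f f' : ι → R) (g g' : κ → R) :
    ∑ x ∈ s ×ˢ t, |f x.1 * g x.2 - f' x.1 * g' x.2| ≤
      (∑ i ∈ s, |f i|) * ∑ j ∈ t, |g j - g' j| + (∑ i ∈ s, |f i - f' i|) * ∑ j ∈ t, |g' j| := by
  rw [Finset.sum_mul_sum, Finset.sum_mul_sum, ← Finset.sum_product', ← Finset.sum_product',
    ← Finset.sum_add_distrib]
  refine Finset.sum_le_sum fun x _ => ?_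
  calc |f x.1 * g x.2 - f' x.1 * g' x.2|
      = |f x.1 * (g x.2 - g' x.2) + (f x.1 - f' x.1) * g' x.2| := by
        rw [mul_sub, sub_mul, sub_add_sub_cancel]
    _ ≤ |f x.1| * |g x.2 - g' x.2| + |f x.1 - f' x.1| * |g' x.2| := by
        simpa only [abs_mul] using
          abs_add_le (f x.1 * (g x.2 - g' x.2)) ((f x.1 - f' x.1) * g' x.2)

end WeightedSums

section Pinsker

open InformationTheory (klFun klFun_apply klFun_one klFun_nonneg hasDerivAt_klFun)

lemma three_mul_sub_one_sq_le_mul_klFun {x : ℝ} (hx : 0 ≤ x) :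
    3 * (x - 1) ^ 2 ≤ (2 * x + 4) * klFun x := by
  let f : ℝ → ℝ := fun y => (2 * y + 4) * klFun y - 3 * (y - 1) ^ 2
  let f' : ℝ → ℝ := fun y => 4 * (y + 1) * Real.log y - 8 * (y - 1)
  let f'' : ℝ → ℝ := fun y => 4 * (Real.log y - (1 - y⁻¹))
  have hf' : ∀ y, 0 < y → HasDerivAt f (f' y) y := fun y hy => by
    have h := ((((hasDerivAt_id' y).const_mul 2).add_const 4).mul (hasDerivAt_klFun hy.ne')).sub
      ((((hasDerivAt_id' y).sub_const 1).pow 2).const_mul 3)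
    exact h.congr_deriv (by simp only [f', klFun_apply]; ring)
  have hf'' : ∀ y, 0 < y → HasDerivAt f' (f'' y) y := fun y hy => by
    have h := ((((hasDerivAt_id' y).add_const 1).const_mul 4).mul (Real.hasDerivAt_log hy.ne')).sub
      (((hasDerivAt_id' y).sub_const 1).const_mul 8)
    exact h.congr_deriv (by simp only [f'']; field_simp; ring)
  have hf''_nonneg : ∀ y, 0 < y → 0 ≤ f'' y := fun y hy =>
    mul_nonneg zero_le_four (sub_nonneg.2 (Real.one_sub_inv_le_log_of_pos hy))
  have hf_cont : Continuous f := by fun_prop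
  have hf_convex : ConvexOn ℝ (Set.Ici 0) f := by
    refine convexOn_of_hasDerivWithinAt2_nonneg (f' := f') (f'' := f'') (convex_Ici 0)
      hf_cont.continuousOn ?_ ?_ ?_ <;> rw [interior_Ici]
    exacts [fun y hy => (hf' y hy).hasDerivWithinAt, fun y hy => (hf'' y hy).hasDerivWithinAt,
      hf''_nonneg]
  have hf'_one : derivWithin f (Set.Ioi 1) 1 = 0 := by
    rw [(hf' 1 one_pos).hasDerivWithinAt.derivWithin (uniqueDiffWithinAt_Ioi 1)]
    simp [f']
  have hf_one : f 1 = 0 := by simp [f, klFun_one]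
  have hf_min : f 1 ≤ f x := hf_convex.isMinOn_of_rightDeriv_eq_zero (by simp) hf'_one hx
  exact sub_nonneg.1 (hf_one ▸ hf_min)

lemma sub_sq_le_mul_klFun_div {p q : ℝ} (hp : 0 ≤ p) (hq : 0 ≤ q) (hpq : q = 0 → p = 0) :
    (p - q) ^ 2 ≤ (2 * p + 4 * q) / 3 * (q * klFun (p / q)) := by
  obtain rfl | hq_pos := hq.eq_or_lt
  · simp [hpq rfl]
  obtain ⟨x, rfl⟩ : ∃ x, p = x * q := ⟨p / q, (div_mul_cancel₀ p hq_pos.ne').symm⟩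
  have hx : 0 ≤ x := nonneg_of_mul_nonneg_left hp hq_pos
  rw [mul_div_cancel_right₀ x hq_pos.ne']
  calc (x * q - q) ^ 2 = q ^ 2 / 3 * (3 * (x - 1) ^ 2) := by ring
    _ ≤ q ^ 2 / 3 * ((2 * x + 4) * klFun x) :=
      mul_le_mul_of_nonneg_left (three_mul_sub_one_sq_le_mul_klFun hx) (by positivity)
    _ = (2 * (x * q) + 4 * q) / 3 * (q * klFun x) := by ring

lemma sq_sum_abs_sub_le_mul_sum_klFun {ι : Type*} (s : Finset ι) {p q : ι → ℝ}
    (hp : ∀ i ∈ s, 0 ≤ p i) (hq : ∀ i ∈ s, 0 ≤ q i) (hpq : ∀ i ∈ s, q i = 0 → p i = 0) :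
    (∑ i ∈ s, |p i - q i|) ^ 2 ≤
      (∑ i ∈ s, (2 * p i + 4 * q i) / 3) * ∑ i ∈ s, q i * klFun (p i / q i) := by
  refine Finset.sum_sq_le_sum_mul_sum_of_sq_le_mul s (fun i hi => ?_) (fun i hi => ?_)
    fun i hi => ?_
  · linarith [hp i hi, hq i hi]
  · exact mul_nonneg (hq i hi) (klFun_nonneg (div_nonneg (hp i hi) (hq i hi)))
  · rw [sq_abs]
    exact sub_sq_le_mul_klFun_div (hp i hi) (hq i hi) (hpq i hi)

variable {X : Type} [Fintype X] {p q : X → ℝ}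

lemma sum_mul_klFun_div_eq_klDiv_add (hpq : ∀ x, q x = 0 → p x = 0) :
    ∑ x, q x * klFun (p x / q x) = klDiv p q + ∑ x, q x - ∑ x, p x := by
  rw [klDiv, ← Finset.sum_add_distrib, ← Finset.sum_sub_distrib]
  refine Finset.sum_congr rfl fun x _ => ?_
  have hq_mul : q x * (p x / q x) = p x := mul_div_cancel_of_imp' (hpq x)
  rw [klFun_apply]
  linear_combination (Real.log (p x / q x) - 1) * hq_mul

theorem sum_abs_sub_le_sqrt_two_mul_klDiv (hp : p ∈ stdSimplex ℝ X) (hq : q ∈ stdSimplex ℝ X)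
    (hpq : ∀ x, q x = 0 → p x = 0) : ∑ x, |p x - q x| ≤ √(2 * klDiv p q) := by
  have hmass : ∑ x, (2 * p x + 4 * q x) / 3 = 2 := by
    rw [← Finset.sum_div, Finset.sum_add_distrib, ← Finset.mul_sum, ← Finset.mul_sum, hp.2, hq.2]
    norm_num
  have hkl : ∑ x, q x * klFun (p x / q x) = klDiv p q := by
    rw [sum_mul_klFun_div_eq_klDiv_add hpq, hp.2, hq.2, add_sub_cancel_right]
  apply Real.le_sqrt_of_sq_le
  rw [← hmass, ← hkl]
  exact sq_sum_abs_sub_le_mul_sum_klFun Finset.univ (fun x _ => hp.1 x) (fun x _ => hq.1 x)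
    fun x _ => hpq x

end Pinsker

lemma sum_abs_eq_one_of_mem_stdSimplex {ι R : Type*} [Fintype ι] [Ring R] [LinearOrder R]
    [IsOrderedRing R] {p : ι → R} (hp : p ∈ stdSimplex R ι) : ∑ i, |p i| = 1 := by
  simpa only [abs_of_nonneg (hp.1 _)] using hp.2

theorem plug_in_q_kl_bound_general {A M : Type} [Fintype A] [Fintype M]
    {Q : A → M → ℝ} {V : ℝ} (hQ : ∀ a m, |Q a m| ≤ V)
    {p p' : A → ℝ} (hp : p ∈ stdSimplex ℝ A) (hp' : p' ∈ stdSimplex ℝ A)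
    {r r' : M → ℝ} (hr : r ∈ stdSimplex ℝ M) (hr' : r' ∈ stdSimplex ℝ M)
    (hpp' : ∀ a, p' a = 0 → p a = 0) (hrr' : ∀ m, r' m = 0 → r m = 0) :
    |(∑ m, ∑ a, Q a m * r' m * p' a) - ∑ m, ∑ a, Q a m * r m * p a| ≤
      V * (√(2 * klDiv p p') + √(2 * klDiv r r')) := by
  have hV : 0 ≤ V := by
    obtain ⟨a, -⟩ := Finset.nonempty_of_sum_ne_zero (hp.2.trans_ne one_ne_zero)
    obtain ⟨m, -⟩ := Finset.nonempty_of_sum_ne_zero (hr.2.trans_ne one_ne_zero)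
    exact (abs_nonneg _).trans (hQ a m)
  have hprod : ∑ x : M × A, |r x.1 * p x.2 - r' x.1 * p' x.2| ≤
      ∑ a, |p a - p' a| + ∑ m, |r m - r' m| := by
    simpa only [Finset.univ_product_univ, sum_abs_eq_one_of_mem_stdSimplex hr,
      sum_abs_eq_one_of_mem_stdSimplex hp', one_mul, mul_one]
      using sum_product_abs_mul_sub_mul_le Finset.univ Finset.univ r r' p p'
  calc |(∑ m, ∑ a, Q a m * r' m * p' a) - ∑ m, ∑ a, Q a m * r m * p a|
      = |∑ x : M × A, Q x.2 x.1 * (r x.1 * p x.2 - r' x.1 * p' x.2)| := by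
        rw [abs_sub_comm]
        simp only [Fintype.sum_prod_type, mul_sub, Finset.sum_sub_distrib, mul_assoc]
    _ ≤ V * ∑ x : M × A, |r x.1 * p x.2 - r' x.1 * p' x.2| :=
        abs_sum_mul_le_mul_sum_abs _ fun x _ => hQ x.2 x.1
    _ ≤ V * (√(2 * klDiv p p') + √(2 * klDiv r r')) := by
        gcongr
        exact hprod.trans (add_le_add (sum_abs_sub_le_sqrt_two_mul_klDiv hp hp' hpp')
          (sum_abs_sub_le_sqrt_two_mul_klDiv hr hr' hrr'))

/-- for any mediated Q-function `Q` with sup-norm at most `Vmax`, and pmfs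
`p_b, p̂_b` on `A` (given `s`) and `p_m, p̂_m` on `M` (given `s,a`), the weighted averages
`q(s,a) = Σ_{m,ã} Q(s,ã,m) p_m(m|s,a) p_b(ã|s)` and
`q̄(s,a) = Σ_{m,ã} Q(s,ã,m) p̂_m(m|s,a) p̂_b(ã|s)` satisfy, for every `(s,a)`,
`|q̄(s,a) − q(s,a)| ≤ Vmax (√(2 KL(p_b‖p̂_b)) + √(2 KL(p_m‖p̂_m)))`. -/
theorem plug_in_q_kl_bound {S A M : Type} [Fintype S] [Fintype A] [Fintype M]
    (Q : S → A → M → ℝ) (Vmax : ℝ) (hQ : ∀ s a m, |Q s a m| ≤ Vmax)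
    (pb pbh : S → A → ℝ) (pm pmh : S → A → M → ℝ)
    (hpb0 : ∀ s a, 0 ≤ pb s a) (hpb1 : ∀ s, ∑ a, pb s a = 1)
    (hpbh0 : ∀ s a, 0 ≤ pbh s a) (hpbh1 : ∀ s, ∑ a, pbh s a = 1)
    (hpm0 : ∀ s a m, 0 ≤ pm s a m) (hpm1 : ∀ s a, ∑ m, pm s a m = 1)
    (hpmh0 : ∀ s a m, 0 ≤ pmh s a m) (hpmh1 : ∀ s a, ∑ m, pmh s a m = 1)
    (hacb : ∀ s a, pbh s a = 0 → pb s a = 0)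
    (hacm : ∀ s a m, pmh s a m = 0 → pm s a m = 0)
    (s : S) (a : A) :
    |(∑ m, ∑ ab, Q s ab m * pmh s a m * pbh s ab) -
        ∑ m, ∑ ab, Q s ab m * pm s a m * pb s ab| ≤
      Vmax * (Real.sqrt (2 * klDiv (fun a' => pb s a') (fun a' => pbh s a')) +
        Real.sqrt (2 * klDiv (fun m => pm s a m) (fun m => pmh s a m))) := by
  exact plug_in_q_kl_bound_general (hQ s) ⟨hpb0 s, hpb1 s⟩ ⟨hpbh0 s, hpbh1 s⟩
    ⟨hpm0 s a, hpm1 s a⟩ ⟨hpmh0 s a, hpmh1 s a⟩ (hacb s) (hacm s a)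
end
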